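/- Fix a real number g > 0, real constant matrices B (n×m), C (p×n), D (p×m), a continuous matrix-valued function A : ℝ → ℝ^{n×n}, and a differentiable symmetric-matrix-valued function P : ℝ → ℝ^{n×n} with derivative P′. Let β : ℝ → ℝᵐ be continuous and let x : ℝ → ℝⁿ be differentiable with x′(t) = A(t)x(t) + Bβ(t) for all t, and define z(t) := Cx(t) + Dβ(t). Suppose that for every t ∈ [0, T] the (n+m)×(n+m) symmetric block matrix with blocks [P′(t) + A(t)ᵀP(t) + P(t)A(t) + CᵀC, CᵀD + P(t)B; BᵀP(t) + DᵀC, DᵀD − g²I] is negative semidefinite. Then x(T)ᵀP(T)x(T) + ∫₀ᵀ (‖z(t)‖² − g²‖β(t)‖²) dt ≤ x(0)ᵀP(0)x(0). -/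

import Mathlib

open Matrix

/-!
Along a trajectory, the quadratic form of the block matrix evaluated at the pair `(x, β)` is exactly
the derivative of the storage `xᵀ P x` plus the supply rate `‖z‖² - g² ‖β‖²`. Negative
semidefiniteness therefore bounds the derivative of the storage by minus the supply rate, and
integrating this bound gives the dissipation inequality.
-/

section Derivatives

variable {𝕜 ι κ : Type*} [NontriviallyNormedField 𝕜] [Fintype ι] {s : Set 𝕜} {t : 𝕜}

theorem hasDerivWithinAt_dotProduct {u v : 𝕜 → ι → 𝕜} {u' v' : ι → 𝕜}
    (hu : HasDerivWithinAt u u' s t) (hv : HasDerivWithinAt v v' s t) :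
    HasDerivWithinAt (fun r => u r ⬝ᵥ v r) (u' ⬝ᵥ v t + u t ⬝ᵥ v') s t := by
  simp only [dotProduct, ← Finset.sum_add_distrib]
  exact HasDerivWithinAt.fun_sum fun i _ =>
    (hasDerivWithinAt_pi.1 hu i).mul (hasDerivWithinAt_pi.1 hv i)

theorem hasDerivWithinAt_mulVec [Finite κ] {M : 𝕜 → Matrix κ ι 𝕜} {M' : Matrix κ ι 𝕜}
    {u : 𝕜 → ι → 𝕜} {u' : ι → 𝕜}
    (hM : ∀ i j, HasDerivWithinAt (fun r => M r i j) (M' i j) s t)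
    (hu : HasDerivWithinAt u u' s t) :
    HasDerivWithinAt (fun r => M r *ᵥ u r) (M' *ᵥ u t + M t *ᵥ u') s t :=
  hasDerivWithinAt_pi.2 fun i => hasDerivWithinAt_dotProduct (hasDerivWithinAt_pi.2 (hM i)) hu

theorem hasDerivWithinAt_dotProduct_mulVec_self {P : 𝕜 → Matrix ι ι 𝕜} {P' : Matrix ι ι 𝕜}
    {x : 𝕜 → ι → 𝕜} {x' : ι → 𝕜}
    (hP : ∀ i j, HasDerivWithinAt (fun r => P r i j) (P' i j) s t)
    (hx : HasDerivWithinAt x x' s t) :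
    HasDerivWithinAt (fun r => x r ⬝ᵥ P r *ᵥ x r)
      (x' ⬝ᵥ P t *ᵥ x t + x t ⬝ᵥ (P' *ᵥ x t + P t *ᵥ x')) s t :=
  hasDerivWithinAt_dotProduct hx (hasDerivWithinAt_mulVec hP hx)

end Derivatives

theorem dotProduct_transpose_mul_mulVec {R k l o : Type*} [NonUnitalCommSemiring R] [Fintype k]
    [Fintype l] [Fintype o] (M : Matrix k l R) (N : Matrix k o R) (u : l → R) (v : o → R) :
    u ⬝ᵥ (Mᵀ * N) *ᵥ v = (M *ᵥ u) ⬝ᵥ N *ᵥ v := by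
  rw [← mulVec_mulVec, dotProduct_mulVec, vecMul_transpose]

section SupplyRate

variable {R m p : Type*} [CommRing R] [Fintype m] [Fintype p]

/-- The supply rate `‖z‖² - g² ‖w‖²` of the bounded real lemma, for an output `z`, a disturbance `w`
and an attenuation level `g`; the Euclidean norms are written as sums of squares. -/
def supplyRate (g : R) (z : p → R) (w : m → R) : R :=
  (∑ i, z i ^ 2) - g ^ 2 * ∑ i, w i ^ 2

theorem supplyRate_eq_dotProduct (g : R) (z : p → R) (w : m → R) :
    supplyRate g z w = z ⬝ᵥ z - g ^ 2 * (w ⬝ᵥ w) := by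
  simp only [supplyRate, dotProduct, sq]

theorem continuous_supplyRate [TopologicalSpace R] [IsTopologicalRing R] (g : R) :
    Continuous fun q : (p → R) × (m → R) => supplyRate g q.1 q.2 := by
  unfold supplyRate
  fun_prop

theorem intervalIntegrable_supplyRate {n : Type*} [Fintype n] (g a b : ℝ)
    {C : ℝ → Matrix p n ℝ} {D : ℝ → Matrix p m ℝ} {x : ℝ → n → ℝ} {β : ℝ → m → ℝ} {z : ℝ → p → ℝ}
    (hC : Continuous C) (hD : Continuous D) (hx : Continuous x) (hβ : Continuous β)
    (hz : ∀ t, z t = C t *ᵥ x t + D t *ᵥ β t) :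
    IntervalIntegrable (fun t => supplyRate g (z t) (β t)) MeasureTheory.volume a b := by
  have hz_cont : Continuous z := by
    rw [funext hz]
    exact (hC.matrix_mulVec hx).add (hD.matrix_mulVec hβ)
  exact ((continuous_supplyRate g).comp (hz_cont.prodMk hβ)).intervalIntegrable a b

end SupplyRate

section BoundedReal

variable {R n m p : Type*} [CommRing R] [Fintype n] [Fintype m] [Fintype p] [DecidableEq m]

/-- The block matrix of the bounded real lemma for the system `x' = A x + B w`, `z = C x + D w` with
attenuation level `g`. The storage is `xᵀ P x`, and `P'` stands for the time derivative of `P`. -/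
def boundedRealMatrix (g : R) (A : Matrix n n R) (B : Matrix n m R) (C : Matrix p n R)
    (D : Matrix p m R) (P P' : Matrix n n R) : Matrix (n ⊕ m) (n ⊕ m) R :=
  fromBlocks (P' + Aᵀ * P + P * A + Cᵀ * C) (Cᵀ * D + P * B)
    (Bᵀ * P + Dᵀ * C) (Dᵀ * D - g ^ 2 • (1 : Matrix m m R))

theorem dotProduct_boundedRealMatrix_mulVec (g : R) (A : Matrix n n R) (B : Matrix n m R)
    (C : Matrix p n R) (D : Matrix p m R) (P P' : Matrix n n R) (x : n → R) (w : m → R) :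
    Sum.elim x w ⬝ᵥ boundedRealMatrix g A B C D P P' *ᵥ Sum.elim x w =
      (A *ᵥ x + B *ᵥ w) ⬝ᵥ P *ᵥ x + x ⬝ᵥ (P' *ᵥ x + P *ᵥ (A *ᵥ x + B *ᵥ w)) +
        supplyRate g (C *ᵥ x + D *ᵥ w) w := by
  simp only [boundedRealMatrix, supplyRate_eq_dotProduct, fromBlocks_mulVec,
    sumElim_dotProduct_sumElim, Sum.elim_comp_inl, Sum.elim_comp_inr, add_mulVec, sub_mulVec,
    smul_mulVec, one_mulVec, mulVec_add, dotProduct_add, add_dotProduct, dotProduct_sub,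
    dotProduct_smul, smul_eq_mul, dotProduct_transpose_mul_mulVec, ← mulVec_mulVec _ P]
  ring

end BoundedReal

theorem add_integral_le_of_hasDerivWithinAt_add_nonpos {a b : ℝ} (hab : a ≤ b)
    {V V' f : ℝ → ℝ} (hV : ∀ t ∈ Set.Icc a b, HasDerivWithinAt V (V' t) (Set.Icc a b) t)
    (hf : IntervalIntegrable f MeasureTheory.volume a b)
    (hle : ∀ t ∈ Set.Ioo a b, V' t + f t ≤ 0) :
    V b + ∫ t in a..b, f t ≤ V a := by
  have hV_right : ∀ t ∈ Set.Ioo a b, HasDerivWithinAt V (V' t) (Set.Ioi t) t := fun t ht =>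
    ((hV t (Set.Ioo_subset_Icc_self ht)).hasDerivAt (Icc_mem_nhds ht.1 ht.2)).hasDerivWithinAt
  have h_sub : V b - V a ≤ ∫ t in a..b, -f t :=
    intervalIntegral.sub_le_integral_of_hasDeriv_right_of_le hab
      (fun t ht => (hV t ht).continuousWithinAt) hV_right
      ((intervalIntegrable_iff_integrableOn_Icc_of_le hab).1 hf.neg)
      fun t ht => le_neg_iff_add_nonpos_right.2 (hle t ht)
  rw [intervalIntegral.integral_neg] at h_sub
  linarith

theorem stmt4_general {n m p : Type*} [Fintype n] [Fintype m] [Fintype p] [DecidableEq m]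
    {g a b : ℝ} (hab : a ≤ b) {A : ℝ → Matrix n n ℝ} {B : ℝ → Matrix n m ℝ}
    {C : ℝ → Matrix p n ℝ} {D : ℝ → Matrix p m ℝ} {P P' : ℝ → Matrix n n ℝ}
    {x : ℝ → n → ℝ} {β : ℝ → m → ℝ} {z : ℝ → p → ℝ}
    (hP : ∀ t ∈ Set.Icc a b, ∀ i j,
      HasDerivWithinAt (fun s => P s i j) (P' t i j) (Set.Icc a b) t)
    (hx : ∀ t ∈ Set.Icc a b, HasDerivWithinAt x (A t *ᵥ x t + B t *ᵥ β t) (Set.Icc a b) t)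
    (hz : ∀ t ∈ Set.Ioo a b, z t = C t *ᵥ x t + D t *ᵥ β t)
    (h_int : IntervalIntegrable (fun t => supplyRate g (z t) (β t)) MeasureTheory.volume a b)
    (hLMI : ∀ t ∈ Set.Ioo a b, ∀ v : n ⊕ m → ℝ,
      v ⬝ᵥ boundedRealMatrix g (A t) (B t) (C t) (D t) (P t) (P' t) *ᵥ v ≤ 0) :
    x b ⬝ᵥ P b *ᵥ x b + ∫ t in a..b, supplyRate g (z t) (β t) ≤ x a ⬝ᵥ P a *ᵥ x a := by
  refine add_integral_le_of_hasDerivWithinAt_add_nonpos hab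
    (fun t ht => hasDerivWithinAt_dotProduct_mulVec_self (hP t ht) (hx t ht)) h_int
    fun t ht => ?_
  rw [hz t ht, ← dotProduct_boundedRealMatrix_mulVec]
  exact hLMI t ht (Sum.elim (x t) (β t))

/-- deterministic dissipation inequality with supply rate
`‖z‖² − g²‖β‖²` and storage function `x ↦ xᵀ P(t) x`, under the pointwise
negative-semidefiniteness of the block LMI matrix on `[0, T]`. -/
theorem stmt4 (n m p : ℕ) (g : ℝ) (hg : 0 < g)
    (B : Matrix (Fin n) (Fin m) ℝ) (C : Matrix (Fin p) (Fin n) ℝ)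
    (D : Matrix (Fin p) (Fin m) ℝ)
    (A : ℝ → Matrix (Fin n) (Fin n) ℝ)
    (hAcont : ∀ i j, Continuous fun t => A t i j)
    (P P' : ℝ → Matrix (Fin n) (Fin n) ℝ)
    (hPsymm : ∀ t, (P t)ᵀ = P t)
    (hPderiv : ∀ t, ∀ i j, HasDerivAt (fun s => P s i j) (P' t i j) t)
    (β : ℝ → Fin m → ℝ) (hβ : Continuous β)
    (x : ℝ → Fin n → ℝ)
    (hx : ∀ t, HasDerivAt x (A t *ᵥ x t + B *ᵥ β t) t)
    (z : ℝ → Fin p → ℝ) (hz : ∀ t, z t = C *ᵥ x t + D *ᵥ β t)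
    (T : ℝ) (hT : 0 ≤ T)
    (hLMI : ∀ t ∈ Set.Icc (0 : ℝ) T, ∀ v : Fin n ⊕ Fin m → ℝ,
      v ⬝ᵥ (Matrix.fromBlocks
        (P' t + (A t)ᵀ * P t + P t * A t + Cᵀ * C) (Cᵀ * D + P t * B)
        (Bᵀ * P t + Dᵀ * C)
        (Dᵀ * D - g ^ 2 • (1 : Matrix (Fin m) (Fin m) ℝ))).mulVec v ≤ 0) :
    x T ⬝ᵥ (P T).mulVec (x T)
        + ∫ t in (0 : ℝ)..T, ((∑ i, (z t i) ^ 2) - g ^ 2 * ∑ i, (β t i) ^ 2)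
      ≤ x 0 ⬝ᵥ (P 0).mulVec (x 0) :=
  stmt4_general hT (fun t _ i j => (hPderiv t i j).hasDerivWithinAt)
    (fun t _ => (hx t).hasDerivWithinAt) (fun t _ => hz t)
    (intervalIntegrable_supplyRate g 0 T continuous_const continuous_const
      (continuous_iff_continuousAt.2 fun t => (hx t).continuousAt) hβ hz)
    fun t ht => hLMI t (Set.Ioo_subset_Icc_self ht)
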